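/- Suppose d − m − 1 ≤ α < d − m (so α ∈ (0,d)). Then for every β > α − (α − m)/(d − 2m) and every C > 0 there exist a measure μ ∈ M_d with 0 < I_α(μ) < ∞ and a real number R > 1 such that ∫_{B^{d−1}(0,1)} |μ̂(R(ξ, ⟨Mξ,ξ⟩))|² √(1+4|ξ|²) dξ > C · R^{−β} · I_α(μ). (Equivalently, β(α, H_m^{d−1}) ≤ α − (α − m)/(d − 2m).) -/

import Mathlib

open MeasureTheory Metric
open scoped ENNReal NNReal

noncomputable section

/-- The quadratic form `⟨Mξ, ξ⟩` on `ℝ^{d-1}`, where the diagonal matrix `M` has its first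
`d-1-m` diagonal entries equal to `+1` and its last `m` diagonal entries equal to `-1`. -/
def hypQ (d m : ℕ) (ξ : EuclideanSpace ℝ (Fin (d - 1))) : ℝ :=
  ∑ i : Fin (d - 1), (if (i : ℕ) < d - 1 - m then (1 : ℝ) else -1) * ξ i ^ 2

/-- The point `(ξ, ⟨Mξ, ξ⟩) ∈ ℝ^d` on the hyperbolic paraboloid. -/
def hypLift (d m : ℕ) (ξ : EuclideanSpace ℝ (Fin (d - 1))) : EuclideanSpace ℝ (Fin d) :=
  (EuclideanSpace.equiv (Fin d) ℝ).symm
    (fun i => if h : (i : ℕ) < d - 1 then ξ ⟨i, h⟩ else hypQ d m ξ)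

/-- The Fourier transform `μ̂(ζ) = ∫ e^{-i x·ζ} dμ(x)` of a measure on `ℝ^d`. -/
def ftM {d : ℕ} (μ : Measure (EuclideanSpace ℝ (Fin d))) (ζ : EuclideanSpace ℝ (Fin d)) : ℂ :=
  ∫ x, Complex.exp (-(Complex.I * (((∑ i, x i * ζ i) : ℝ) : ℂ))) ∂μ

/-- The `α`-dimensional energy `I_α(μ) = ∬ |x-y|^{-α} dμ(x) dμ(y)`. -/
def energy {d : ℕ} (α : ℝ) (μ : Measure (EuclideanSpace ℝ (Fin d))) : ℝ≥0∞ :=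
  ∫⁻ x, ∫⁻ y, ENNReal.ofReal (dist x y) ^ (-α) ∂μ ∂μ

/-- The hyperbolic average `∫_{B^{d-1}(0,1)} |μ̂(R(ξ,⟨Mξ,ξ⟩))|² √(1+4|ξ|²) dξ`. -/
def hypAvg (d m : ℕ) (μ : Measure (EuclideanSpace ℝ (Fin d))) (R : ℝ) : ℝ :=
  ∫ ξ in ball (0 : EuclideanSpace ℝ (Fin (d - 1))) 1,
    ‖ftM μ (R • hypLift d m ξ)‖ ^ 2 * Real.sqrt (1 + 4 * ‖ξ‖ ^ 2)

/-- The decay estimate `∫_H |μ̂(Rξ)|² dσ(ξ) ≤ C R^{-β} I_α(μ)` holds with some constant `C`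
uniformly over measures in `M_d` and all `R > 1`. -/
def decayBound (d m : ℕ) (α β : ℝ) : Prop :=
  ∃ C : ℝ, 0 < C ∧ ∀ μ : Measure (EuclideanSpace ℝ (Fin d)), IsFiniteMeasure μ →
    μ ((closedBall 0 1)ᶜ) = 0 → ∀ R : ℝ, 1 < R →
    ENNReal.ofReal (hypAvg d m μ R) ≤ ENNReal.ofReal (C * R ^ (-β)) * energy α μ

/-- The decay estimate with exponent `β` fails for every constant `C > 0`: there is a measure
in `M_d` with finite positive `α`-energy and an `R > 1` violating the estimate. -/
def decayFails (d m : ℕ) (α β : ℝ) : Prop :=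
  ∀ C : ℝ, 0 < C → ∃ μ : Measure (EuclideanSpace ℝ (Fin d)), IsFiniteMeasure μ ∧
    μ ((closedBall 0 1)ᶜ) = 0 ∧ 0 < energy α μ ∧ energy α μ ≠ ⊤ ∧
    ∃ R : ℝ, 1 < R ∧ C * R ^ (-β) * (energy α μ).toReal < hypAvg d m μ R

/-!
The measure is built so that `x ↦ x · R(ξ, ⟨Mξ, ξ⟩)` stays within a small constant of `2πℤ` on its
support for all `ξ` in a large set; there `|μ̂|` is bounded below. Each negative direction is paired
with a positive one, and the support is put on the antidiagonal `(x, -x)` of every pair. The phase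
of a pair is `x(a - b) + t(a² - b²)`, which vanishes on the diagonal `a = b`, so pairing costs only
one power of `R` in the measure of the frequency set while the support loses one dimension.

Of the `d - 1 - 2m` unpaired directions, one, if there is any, carries a Knapp box of side
`R^(-1/2)` in both physical and frequency space. In the others the frequencies lie in an arithmetic
progression of step `R^(-κ)`, and the support lies in progressions of the dual steps `R^(κ-1)` in
the position and `R^(2κ-1)` in the last coordinate, which makes the phase at their points a multiple
of `2π`. The measure has ball growth of an exponent above `α` up to a power of `R`, which bounds
its energy, and the choice of `κ` that makes this exponent close to `α` gives the stated decay rate.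
-/

section Energy

variable {X : Type*} [MetricSpace X] [MeasurableSpace X]

lemma measure_singleton_eq_zero_of_frostman {μ : Measure X} {α₀ K : ℝ} (hα₀ : 0 < α₀) (x : X)
    (hμ : ∀ r, 0 < r → μ (closedBall x r) ≤ ENNReal.ofReal (K * r ^ α₀)) : μ {x} = 0 := by
  have hlim : Filter.Tendsto (fun r : ℝ => ENNReal.ofReal (K * r ^ α₀)) (nhdsWithin 0 (Set.Ioi 0))
      (nhds 0) := by
    have hcont : Continuous fun r : ℝ => ENNReal.ofReal (K * r ^ α₀) :=
      ENNReal.continuous_ofReal.comp (continuous_const.mul (Real.continuous_rpow_const hα₀.le))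
    simpa [Real.zero_rpow hα₀.ne'] using (hcont.tendsto 0).mono_left nhdsWithin_le_nhds
  refine le_antisymm (ge_of_tendsto hlim ?_) zero_le
  filter_upwards [self_mem_nhdsWithin] with r hr
  exact (measure_mono (by simpa using (Set.mem_Ioi.1 hr).le)).trans (hμ r hr)

lemma lintegral_Ioc_zero_one_rpow_sub_one {α : ℝ} (hα : 0 < α) :
    ∫⁻ t in Set.Ioc (0 : ℝ) 1, ENNReal.ofReal (t ^ (α - 1)) = ENNReal.ofReal α⁻¹ := by
  have hint : IntervalIntegrable (fun t : ℝ => t ^ (α - 1)) volume 0 1 :=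
    intervalIntegral.intervalIntegrable_rpow' (by linarith)
  rw [← ofReal_integral_eq_lintegral_ofReal
      ((intervalIntegrable_iff_integrableOn_Ioc_of_le zero_le_one).1 hint)
      ((ae_restrict_mem measurableSet_Ioc).mono fun t ht => Real.rpow_nonneg ht.1.le _),
    ← intervalIntegral.integral_of_le zero_le_one, integral_rpow (Or.inl (by linarith))]
  simp [Real.zero_rpow hα.ne']

lemma lintegral_Ioi_one_rpow_neg {s : ℝ} (hs : 0 < s) :
    ∫⁻ t in Set.Ioi (1 : ℝ), ENNReal.ofReal (t ^ (-s - 1)) = ENNReal.ofReal s⁻¹ := by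
  rw [← ofReal_integral_eq_lintegral_ofReal (integrableOn_Ioi_rpow_of_lt (by linarith) one_pos)
      ((ae_restrict_mem measurableSet_Ioi).mono fun t ht =>
        Real.rpow_nonneg (zero_le_one.trans (le_of_lt ht)) _),
    integral_Ioi_rpow_of_lt (by linarith) one_pos]
  simp [neg_div_neg_eq]

lemma measure_setOf_le_inv_dist_le_of_frostman {μ : Measure X} {α₀ K : ℝ} {x : X}
    (hμ : ∀ r, 0 < r → μ (closedBall x r) ≤ ENNReal.ofReal (K * r ^ α₀)) {t : ℝ} (ht : 0 < t) :
    μ {y | t ≤ (dist x y)⁻¹} ≤ ENNReal.ofReal (K * t ^ (-α₀)) := by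
  have hsub : {y | t ≤ (dist x y)⁻¹} ⊆ closedBall x t⁻¹ := fun y hy => by
    rw [mem_closedBall, dist_comm]
    exact (le_inv_comm₀ ht (inv_pos.1 (ht.trans_le hy))).1 hy
  rw [Real.rpow_neg_eq_inv_rpow]
  exact (measure_mono hsub).trans (hμ _ (inv_pos.2 ht))

lemma lintegral_dist_rpow_neg_le [OpensMeasurableSpace X] {μ : Measure X}
    [IsProbabilityMeasure μ] {α α₀ K : ℝ} (hα : 0 < α) (hα₀ : α < α₀) (hK : 0 ≤ K) (x : X)
    (hμ : ∀ r, 0 < r → μ (closedBall x r) ≤ ENNReal.ofReal (K * r ^ α₀)) :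
    ∫⁻ y, ENNReal.ofReal (dist x y) ^ (-α) ∂μ ≤
      ENNReal.ofReal (1 + α / (α₀ - α) * K) := by
  have hrpow : ∀ᵐ y ∂μ, ENNReal.ofReal (dist x y) ^ (-α) = ENNReal.ofReal ((dist x y)⁻¹ ^ α) := by
    filter_upwards [measure_eq_zero_iff_ae_notMem.1
      (measure_singleton_eq_zero_of_frostman (hα.trans hα₀) x hμ)] with y hy
    rw [ENNReal.ofReal_rpow_of_pos (dist_pos.2 (Ne.symm hy)), Real.rpow_neg_eq_inv_rpow]
  have htail : ∀ t : ℝ, 0 < t → μ {y | t ≤ (dist x y)⁻¹} * ENNReal.ofReal (t ^ (α - 1)) ≤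
      ENNReal.ofReal K * ENNReal.ofReal (t ^ (-(α₀ - α) - 1)) := by
    intro t ht
    refine (mul_le_mul_left (measure_setOf_le_inv_dist_le_of_frostman hμ ht) _).trans_eq ?_
    rw [ENNReal.ofReal_mul hK, mul_assoc, ← ENNReal.ofReal_mul (by positivity),
      ← Real.rpow_add ht]
    ring_nf
  have hhead : ∀ t : ℝ, μ {y | t ≤ (dist x y)⁻¹} * ENNReal.ofReal (t ^ (α - 1)) ≤
      ENNReal.ofReal (t ^ (α - 1)) := fun t => mul_le_of_le_one_left' prob_le_one
  calc ∫⁻ y, ENNReal.ofReal (dist x y) ^ (-α) ∂μ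
      = ENNReal.ofReal α * ∫⁻ t in Set.Ioi 0,
          μ {y | t ≤ (dist x y)⁻¹} * ENNReal.ofReal (t ^ (α - 1)) := by
        rw [lintegral_congr_ae hrpow]
        exact lintegral_rpow_eq_lintegral_meas_le_mul μ (.of_forall fun y => by positivity)
          (by fun_prop) hα
    _ ≤ ENNReal.ofReal α * ((∫⁻ t in Set.Ioc (0 : ℝ) 1, ENNReal.ofReal (t ^ (α - 1))) +
          ∫⁻ t in Set.Ioi (1 : ℝ), ENNReal.ofReal K * ENNReal.ofReal (t ^ (-(α₀ - α) - 1))) := by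
        rw [← Set.Ioc_union_Ioi_eq_Ioi (zero_le_one' ℝ),
          lintegral_union measurableSet_Ioi (Set.Ioc_disjoint_Ioi le_rfl)]
        gcongr ENNReal.ofReal α * (?_ + ?_)
        · exact lintegral_mono hhead
        · exact setLIntegral_mono' measurableSet_Ioi fun t ht => htail t (one_pos.trans ht)
    _ = ENNReal.ofReal (1 + α / (α₀ - α) * K) := by
        have hαα₀ : 0 < α₀ - α := sub_pos.2 hα₀
        rw [lintegral_const_mul' _ _ ENNReal.ofReal_ne_top,
          lintegral_Ioc_zero_one_rpow_sub_one hα, lintegral_Ioi_one_rpow_neg hαα₀,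
          ← ENNReal.ofReal_mul hK, ← ENNReal.ofReal_add (by positivity) (by positivity),
          ← ENNReal.ofReal_mul hα.le]
        congr 1
        field_simp

lemma energy_le_of_frostman {d : ℕ} {μ : Measure (EuclideanSpace ℝ (Fin d))}
    [IsProbabilityMeasure μ] {α α₀ K : ℝ} (hα : 0 < α) (hα₀ : α < α₀) (hK : 0 ≤ K)
    (hμ : ∀ x r, 0 < r → μ (closedBall x r) ≤ ENNReal.ofReal (K * r ^ α₀)) :
    energy α μ ≤ ENNReal.ofReal (1 + α / (α₀ - α) * K) :=
  (lintegral_mono fun x => lintegral_dist_rpow_neg_le hα hα₀ hK x (hμ x)).trans (by simp)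

lemma lintegral_pos_of_forall_pos {Y : Type*} [MeasurableSpace Y] {ν : Measure Y} [NeZero ν]
    {f : Y → ℝ≥0∞} (hf : Measurable f) (hpos : ∀ y, 0 < f y) : 0 < ∫⁻ y, f y ∂ν := by
  rw [lintegral_pos_iff_support hf, Function.support_eq_univ fun y => (hpos y).ne']
  exact pos_iff_ne_zero.2 (Measure.measure_univ_ne_zero.2 (NeZero.ne ν))

lemma energy_pos {d : ℕ} (μ : Measure (EuclideanSpace ℝ (Fin d))) [SFinite μ] [NeZero μ] {α : ℝ}
    (hα : 0 ≤ α) : 0 < energy α μ := by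
  have hkernel : Measurable fun z : EuclideanSpace ℝ (Fin d) × EuclideanSpace ℝ (Fin d) =>
      ENNReal.ofReal (dist z.1 z.2) ^ (-α) := by fun_prop
  exact lintegral_pos_of_forall_pos hkernel.lintegral_prod_right' fun x =>
    lintegral_pos_of_forall_pos (by fun_prop) fun y => by
      simp [pos_iff_ne_zero, ENNReal.rpow_eq_zero_iff, hα.not_gt]

end Energy

lemma decayFails_of_eventually_frostman {d m : ℕ} {α α₀ β e₁ e₂ K c : ℝ} (hα : 0 < α)
    (hα₀ : α < α₀) (he₁ : 0 ≤ e₁) (hβ : e₁ + e₂ < β) (hK : 0 ≤ K) (hc : 0 < c)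
    (h : ∀ᶠ R : ℝ in Filter.atTop, ∃ μ : Measure (EuclideanSpace ℝ (Fin d)),
      IsProbabilityMeasure μ ∧ μ (closedBall 0 1)ᶜ = 0 ∧
      (∀ x r, 0 < r → μ (closedBall x r) ≤ ENNReal.ofReal (K * R ^ e₁ * r ^ α₀)) ∧
      c * R ^ (-e₂) ≤ hypAvg d m μ R) :
    decayFails d m α β := by
  intro C hC
  have : 0 < α₀ - α := sub_pos.2 hα₀
  set E : ℝ := 1 + α / (α₀ - α) * K
  have hlarge : ∀ᶠ R : ℝ in Filter.atTop, C * E / c < R ^ (β - e₁ - e₂) :=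
    (tendsto_rpow_atTop (by linarith)).eventually_gt_atTop _
  obtain ⟨R, ⟨μ, hprob, hsupp, hfrost, havg⟩, hRlarge, hR⟩ :=
    (h.and (hlarge.and (Filter.eventually_gt_atTop 1))).exists
  have hR₀ : 0 < R := one_pos.trans hR
  have hener := energy_le_of_frostman hα hα₀ (by positivity) hfrost
  have hener' : (energy α μ).toReal ≤ E * R ^ e₁ := by
    refine (ENNReal.toReal_le_of_le_ofReal (by positivity) hener).trans ?_
    linear_combination Real.one_le_rpow hR.le he₁
  refine ⟨μ, inferInstance, hsupp, energy_pos μ hα.le,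
    ne_top_of_le_ne_top ENNReal.ofReal_ne_top hener, R, hR, lt_of_lt_of_le ?_ havg⟩
  calc C * R ^ (-β) * (energy α μ).toReal
      ≤ C * R ^ (-β) * (E * R ^ e₁) := by gcongr
    _ = C * E * (R ^ (-β) * R ^ e₁) := by ring
    _ < c * R ^ (β - e₁ - e₂) * (R ^ (-β) * R ^ e₁) := by
        exact mul_lt_mul_of_pos_right ((div_lt_iff₀' hc).1 hRlarge) (by positivity)
    _ = c * R ^ (-e₂) := by
        rw [mul_assoc, ← Real.rpow_add hR₀, ← Real.rpow_add hR₀]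
        ring_nf

section BallGrowth

/-- The proportion of `S` inside a ball of radius `r > 0` is at most `g r`, so that normalized
volume on `S` has concentration function at most `g`. -/
def HasBallGrowth {X : Type*} [PseudoMetricSpace X] [MeasureSpace X] (S : Set X) (g : ℝ → ℝ) :
    Prop :=
  ∀ x r, 0 < r → volume (S ∩ closedBall x r) ≤ ENNReal.ofReal (g r) * volume S

variable {X : Type*} [PseudoMetricSpace X] [MeasureSpace X] {S : Set X} {g g' : ℝ → ℝ}

lemma HasBallGrowth.mono (h : HasBallGrowth S g) (hg : ∀ r, 0 < r → g r ≤ g' r) :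
    HasBallGrowth S g' := fun x r hr =>
  (h x r hr).trans (by gcongr; exact hg r hr)

lemma HasBallGrowth.min (h : HasBallGrowth S g) (h' : HasBallGrowth S g') :
    HasBallGrowth S fun r => min (g r) (g' r) := fun x r hr => by
  rcases min_choice (g r) (g' r) with hmin | hmin
  · simpa only [hmin] using h x r hr
  · simpa only [hmin] using h' x r hr

lemma HasBallGrowth.pi {ι : Type*} [Fintype ι] {Y : ι → Type*} [∀ i, PseudoMetricSpace (Y i)]
    [∀ i, MeasureSpace (Y i)] [∀ i, SigmaFinite (volume : Measure (Y i))] {P : ∀ i, Set (Y i)}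
    {G : ι → ℝ → ℝ} (hG : ∀ i r, 0 < r → 0 ≤ G i r) (h : ∀ i, HasBallGrowth (P i) (G i)) :
    HasBallGrowth (Set.univ.pi P) fun r => ∏ i, G i r := fun x r hr => by
  rw [closedBall_pi x hr.le, ← Set.pi_inter_distrib, volume_pi_pi, volume_pi_pi,
    ENNReal.ofReal_prod_of_nonneg fun i _ => hG i r hr, ← Finset.prod_mul_distrib]
  exact Finset.prod_le_prod' fun i _ => h i (x i) r hr

lemma HasBallGrowth.cond_closedBall_le (h : HasBallGrowth S g) (hS : MeasurableSet S)
    (hS₀ : volume S ≠ 0) (hS_top : volume S ≠ ⊤) (x : X) {r : ℝ} (hr : 0 < r) :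
    ProbabilityTheory.cond volume S (closedBall x r) ≤ ENNReal.ofReal (g r) := by
  rw [ProbabilityTheory.cond_apply hS, mul_comm, ← div_eq_mul_inv,
    ENNReal.div_le_iff hS₀ hS_top]
  exact h x r hr

lemma hasBallGrowth_one : HasBallGrowth S fun _ => 1 := fun x r _ => by
  simpa using measure_mono Set.inter_subset_left

lemma hasBallGrowth_of_ofReal_le_volume {S : Set ℝ} {v : ℝ} (hv : 0 < v)
    (hS : ENNReal.ofReal v ≤ volume S) : HasBallGrowth S fun r => 2 * r / v := fun x r hr =>
  calc volume (S ∩ closedBall x r) ≤ ENNReal.ofReal (2 * r) :=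
        (measure_mono Set.inter_subset_right).trans_eq (Real.volume_closedBall x r)
    _ = ENNReal.ofReal (2 * r / v) * ENNReal.ofReal v := by
        rw [← ENNReal.ofReal_mul (by positivity), div_mul_cancel₀ _ hv.ne']
    _ ≤ ENNReal.ofReal (2 * r / v) * volume S := by gcongr

lemma hasBallGrowth_Ico {a : ℝ} (ha : 0 < a) :
    HasBallGrowth (Set.Ico 0 a) fun r => min 1 (2 * r / a) :=
  hasBallGrowth_one.min (hasBallGrowth_of_ofReal_le_volume ha (by simp))

end BallGrowth

section Comb

/-- Equally spaced intervals `[kL, kL + δ)` filling the proportion `δ / L` of `[0, ℓ)`. -/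
def comb (L δ ℓ : ℝ) : Set ℝ := ⋃ k ∈ Finset.range ⌊ℓ / L⌋₊, Set.Ico (L * k) (L * k + δ)

variable {L δ ℓ : ℝ}

lemma measurableSet_comb : MeasurableSet (comb L δ ℓ) :=
  Finset.measurableSet_biUnion _ fun _ _ => measurableSet_Ico

lemma exists_nat_mul_le_of_mem_comb {x : ℝ} (hx : x ∈ comb L δ ℓ) :
    ∃ k : ℕ, L * k ≤ x ∧ x ≤ L * k + δ := by
  simp only [comb, Set.mem_iUnion] at hx
  obtain ⟨k, -, hk⟩ := hx
  exact ⟨k, hk.1, hk.2.le⟩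

lemma comb_subset_Ico (hL : 0 < L) (hδ : δ ≤ L) (hℓ : 0 ≤ ℓ) : comb L δ ℓ ⊆ Set.Ico 0 ℓ := by
  refine Set.iUnion₂_subset fun k hk => Set.Ico_subset_Ico (by positivity) ?_
  have hkN : (k : ℝ) + 1 ≤ ⌊ℓ / L⌋₊ := by exact_mod_cast Finset.mem_range.1 hk
  have hNL : (⌊ℓ / L⌋₊ : ℝ) * L ≤ ℓ := (le_div_iff₀ hL).1 (Nat.floor_le (by positivity))
  linear_combination hδ + L * hkN + hNL

lemma volume_biUnion_Ico_mul (hL : 0 ≤ L) (hδ : δ ≤ L) (s : Finset ℕ) :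
    volume (⋃ k ∈ s, Set.Ico (L * k) (L * k + δ)) = s.card * ENNReal.ofReal δ := by
  have hdisj : (s : Set ℕ).PairwiseDisjoint fun k : ℕ => Set.Ico (L * k) (L * k + δ) := by
    refine ((pairwise_disjoint_on _).2 fun j k hjk => ?_).set_pairwise _
    refine Set.disjoint_left.2 fun x hj hk => (hj.2.trans_le ?_).not_ge hk.1
    have hjk' : (j : ℝ) + 1 ≤ k := by exact_mod_cast hjk
    linear_combination hδ + L * hjk'
  rw [measure_biUnion_finset hdisj fun _ _ => measurableSet_Ico]
  simp [nsmul_eq_mul]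

lemma ofReal_le_volume_comb (hδ : 0 ≤ δ) (hL : 0 < L) (hδL : δ ≤ L) (hLℓ : L ≤ ℓ) :
    ENNReal.ofReal (ℓ * δ / (2 * L)) ≤ volume (comb L δ ℓ) := by
  have hratio : 1 ≤ ℓ / L := (one_le_div hL).2 hLℓ
  have hfloor : ℓ / (2 * L) ≤ ⌊ℓ / L⌋₊ := by
    have hone : (1 : ℝ) ≤ ⌊ℓ / L⌋₊ := by exact_mod_cast (Nat.one_le_floor_iff _).2 hratio
    have hlt := Nat.lt_floor_add_one (ℓ / L)
    rw [show ℓ / (2 * L) = ℓ / L / 2 by ring]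
    linarith
  rw [comb, volume_biUnion_Ico_mul hL.le hδL, Finset.card_range, ← ENNReal.ofReal_natCast,
    ← ENNReal.ofReal_mul (by positivity), mul_div_right_comm]
  gcongr

lemma volume_comb_inter_closedBall_le (hL : 0 < L) (hδL : δ ≤ L) (x r : ℝ) :
    volume (comb L δ ℓ ∩ closedBall x r) ≤ ENNReal.ofReal (2 * (r + L) / L) * ENNReal.ofReal δ := by
  classical
  set J : Finset ℕ := {k ∈ Finset.range ⌊ℓ / L⌋₊ |
    (Set.Ico (L * k) (L * k + δ) ∩ closedBall x r).Nonempty}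
  have hcover : comb L δ ℓ ∩ closedBall x r ⊆ ⋃ k ∈ J, Set.Ico (L * k) (L * k + δ) := by
    rintro y ⟨hy, hyx⟩
    simp only [comb, Set.mem_iUnion] at hy ⊢
    obtain ⟨k, hk, hyk⟩ := hy
    exact ⟨k, Finset.mem_filter.2 ⟨hk, y, hyk, hyx⟩, hyk⟩
  have hcells : ⋃ k ∈ J, Set.Ico (L * k) (L * k + L) ⊆ closedBall x (r + L) := by
    refine Set.iUnion₂_subset fun k hk z hz => ?_
    obtain ⟨-, y, hy, hyx⟩ := Finset.mem_filter.1 hk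
    rw [mem_closedBall, Real.dist_eq, abs_le] at hyx ⊢
    constructor <;> linarith [hy.1, hy.2, hz.1, hz.2, hyx.1, hyx.2]
  have hcard : (J.card : ℝ≥0∞) ≤ ENNReal.ofReal (2 * (r + L) / L) := by
    rw [ENNReal.ofReal_div_of_pos hL, ENNReal.le_div_iff_mul_le (by simp [hL]) (by simp),
      ← volume_biUnion_Ico_mul hL.le le_rfl, ← Real.volume_closedBall]
    exact measure_mono hcells
  calc volume (comb L δ ℓ ∩ closedBall x r) ≤ J.card * ENNReal.ofReal δ :=
        (measure_mono hcover).trans_eq (volume_biUnion_Ico_mul hL.le hδL J)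
    _ ≤ ENNReal.ofReal (2 * (r + L) / L) * ENNReal.ofReal δ := by gcongr

lemma hasBallGrowth_comb (hδ : 0 < δ) (hδL : δ ≤ L) (hLℓ : L ≤ ℓ) :
    HasBallGrowth (comb L δ ℓ) fun r => min (4 * (r + L) / ℓ) (4 * r * L / (ℓ * δ)) := by
  have hL : 0 < L := hδ.trans_le hδL
  have hℓ : 0 < ℓ := hL.trans_le hLℓ
  have hvol := ofReal_le_volume_comb hδ.le hL hδL hLℓ
  refine HasBallGrowth.min (fun x r hr => ?_) ?_
  · calc volume (comb L δ ℓ ∩ closedBall x r)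
        ≤ ENNReal.ofReal (2 * (r + L) / L) * ENNReal.ofReal δ :=
          volume_comb_inter_closedBall_le hL hδL x r
      _ = ENNReal.ofReal (4 * (r + L) / ℓ) * ENNReal.ofReal (ℓ * δ / (2 * L)) := by
          rw [← ENNReal.ofReal_mul (by positivity), ← ENNReal.ofReal_mul (by positivity)]
          congr 1
          field_simp
          norm_num
      _ ≤ ENNReal.ofReal (4 * (r + L) / ℓ) * volume (comb L δ ℓ) := by gcongr
  · refine (hasBallGrowth_of_ofReal_le_volume (by positivity) hvol).mono fun r _ => le_of_eq ?_
    field_simp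
    norm_num

end Comb

section ScaleGrowth

variable {R c : ℝ}

lemma min_add_rpow_le_mul_max {r σ : ℝ} (hR : 0 < R) (hr : 0 < r) (hσ₀ : 0 ≤ σ) (hσ : σ ≤ 1 / 2) :
    min (r + R ^ (σ - 1)) (r * R ^ σ) ≤ 2 * (r * max 1 ((r ^ 2 * R) ^ (-σ))) := by
  have hρ : (r ^ 2 * R) ^ (-σ) = (r * R) ^ (-(2 * σ)) * R ^ σ := by
    rw [Real.mul_rpow (by positivity) hR.le, Real.mul_rpow hr.le hR.le, ← Real.rpow_natCast r 2,
      ← Real.rpow_mul hr.le, mul_assoc, ← Real.rpow_add hR]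
    push_cast
    ring_nf
  have hspacing : R ^ (σ - 1) = r * ((r * R) ^ (-1 : ℝ) * R ^ σ) := by
    rw [Real.rpow_neg_one, Real.rpow_sub_one hR.ne']
    field_simp
  have hmax₁ : r ≤ r * max 1 ((r ^ 2 * R) ^ (-σ)) := le_mul_of_one_le_right hr.le (le_max_left _ _)
  rcases le_total (r * R) 1 with h | h
  · have hbound : r * R ^ σ ≤ r * max 1 ((r ^ 2 * R) ^ (-σ)) := by
      gcongr
      refine le_max_of_le_right (hρ ▸ le_mul_of_one_le_left (by positivity) ?_)
      exact Real.one_le_rpow_of_pos_of_le_one_of_nonpos (by positivity) h (by linarith)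
    exact (min_le_right _ _).trans (by linarith)
  · have hbound : R ^ (σ - 1) ≤ r * max 1 ((r ^ 2 * R) ^ (-σ)) := by
      rw [hspacing]
      gcongr
      refine le_max_of_le_right ?_
      rw [hρ]
      gcongr
      linarith
    exact (min_le_left _ _).trans (by linarith)

lemma div_le_mul_rpow_sub_one {q σ : ℝ} (hR : 1 ≤ R) (hcq : c ≤ q) (hq : 0 ≤ q) (hσ : 0 ≤ σ) :
    c / R ≤ q * R ^ (σ - 1) := by
  have hR₀ : 0 < R := one_pos.trans_le hR
  rw [Real.rpow_sub_one hR₀.ne', ← mul_div_assoc]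
  gcongr
  exact hcq.trans (le_mul_of_one_le_right hq (Real.one_le_rpow hR hσ))

lemma hasBallGrowth_comb_rpow {q σ : ℝ} (hR : 1 < R) (hc : 0 < c) (hc₁ : c ≤ 1) (hq : 1 ≤ q)
    (hσ₀ : 0 ≤ σ) (hσ : σ ≤ 1 / 2) (hL : q * R ^ (σ - 1) ≤ c) :
    HasBallGrowth (comb (q * R ^ (σ - 1)) (c / R) c)
      fun r => 8 * q / c ^ 2 * (r * max 1 ((r ^ 2 * R) ^ (-σ))) := by
  have hR₀ : 0 < R := one_pos.trans hR
  have hδL := div_le_mul_rpow_sub_one hR.le (hc₁.trans hq) (by linarith) hσ₀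
  refine (hasBallGrowth_comb (by positivity) hδL hL).mono fun r hr => ?_
  have hfirst : 4 * (r + q * R ^ (σ - 1)) / c ≤ 4 * q / c ^ 2 * (r + R ^ (σ - 1)) := by
    rw [div_le_iff₀ hc, show 4 * q / c ^ 2 * (r + R ^ (σ - 1)) * c =
      4 * (q * r + q * R ^ (σ - 1)) / c by field_simp, le_div_iff₀ hc]
    have hrq : r ≤ q * r := le_mul_of_one_le_left hr.le hq
    calc 4 * (r + q * R ^ (σ - 1)) * c ≤ 4 * (r + q * R ^ (σ - 1)) * 1 := by gcongr
      _ ≤ 4 * (q * r + q * R ^ (σ - 1)) := by linarith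
  have hsecond : 4 * r * (q * R ^ (σ - 1)) / (c * (c / R)) = 4 * q / c ^ 2 * (r * R ^ σ) := by
    rw [Real.rpow_sub_one hR₀.ne']
    field_simp
  calc min (4 * (r + q * R ^ (σ - 1)) / c) (4 * r * (q * R ^ (σ - 1)) / (c * (c / R)))
      ≤ min (4 * q / c ^ 2 * (r + R ^ (σ - 1))) (4 * q / c ^ 2 * (r * R ^ σ)) :=
        min_le_min hfirst hsecond.le
    _ = 4 * q / c ^ 2 * min (r + R ^ (σ - 1)) (r * R ^ σ) :=
        (mul_min_of_nonneg _ _ (by positivity)).symm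
    _ ≤ 4 * q / c ^ 2 * (2 * (r * max 1 ((r ^ 2 * R) ^ (-σ)))) := by
        gcongr
        exact min_add_rpow_le_mul_max hR₀ hr hσ₀ hσ
    _ = 8 * q / c ^ 2 * (r * max 1 ((r ^ 2 * R) ^ (-σ))) := by ring

lemma hasBallGrowth_Ico_rpow (hR : 0 < R) (hc : 0 < c) (hc₂ : c ≤ 2) :
    HasBallGrowth (Set.Ico 0 (c * R ^ (-(1 / 2) : ℝ)))
      fun r => 2 / c * min 1 ((r ^ 2 * R) ^ (1 / 2 : ℝ)) := by
  refine (hasBallGrowth_Ico (by positivity)).mono fun r hr => ?_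
  have hρ : (r ^ 2 * R) ^ (1 / 2 : ℝ) = r * R ^ (1 / 2 : ℝ) := by
    rw [← Real.sqrt_eq_rpow, ← Real.sqrt_eq_rpow, Real.sqrt_mul' _ hR.le, Real.sqrt_sq hr.le]
  have hsecond : 2 * r / (c * R ^ (-(1 / 2) : ℝ)) = 2 / c * (r * R ^ (1 / 2 : ℝ)) := by
    rw [Real.rpow_neg hR.le]
    field_simp
  rw [hρ, mul_min_of_nonneg _ _ (by positivity : 0 ≤ 2 / c), mul_one]
  exact min_le_min ((one_le_div hc).2 hc₂) hsecond.le

end ScaleGrowth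

lemma prod_growth_le_rpow {R r κ : ℝ} {m p n : ℕ} (hR : 0 < R) (hr : 0 < r) (hκ₀ : 0 ≤ κ)
    (hκ : 2 * κ * (n + 2) ≤ p) :
    r ^ m * min 1 ((r ^ 2 * R) ^ (1 / 2 : ℝ)) ^ p * (r * max 1 ((r ^ 2 * R) ^ (-κ))) ^ n *
        (r * max 1 ((r ^ 2 * R) ^ (-(2 * κ)))) ≤
      R ^ (p / 2 - κ * (n + 2)) * r ^ (m + p + n + 1 - 2 * κ * (n + 2)) := by
  set ρ : ℝ := r ^ 2 * R with hρ_def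
  have hρ : 0 < ρ := by positivity
  have hscale : R ^ (p / 2 - κ * (n + 2)) * r ^ (m + p + n + 1 - 2 * κ * (n + 2)) =
      r ^ (m + n + 1) * ρ ^ (p / 2 - κ * (n + 2)) := by
    rw [hρ_def, Real.mul_rpow (by positivity) hR.le, ← Real.rpow_natCast r 2, ← Real.rpow_mul hr.le,
      ← Real.rpow_natCast r (m + n + 1), ← mul_assoc, ← Real.rpow_add hr, mul_comm]
    push_cast
    ring_nf
  have hprofile : min 1 (ρ ^ (1 / 2 : ℝ)) ^ p * max 1 (ρ ^ (-κ)) ^ n * max 1 (ρ ^ (-(2 * κ))) ≤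
      ρ ^ (p / 2 - κ * (n + 2)) := by
    rcases le_total ρ 1 with h | h
    · rw [min_eq_right (Real.rpow_le_one hρ.le h (by norm_num)),
        max_eq_right (Real.one_le_rpow_of_pos_of_le_one_of_nonpos hρ h (by linarith)),
        max_eq_right (Real.one_le_rpow_of_pos_of_le_one_of_nonpos hρ h (by linarith)),
        ← Real.rpow_mul_natCast hρ.le, ← Real.rpow_mul_natCast hρ.le, ← Real.rpow_add hρ,
        ← Real.rpow_add hρ]
      ring_nf
      exact le_rfl
    · rw [min_eq_left (Real.one_le_rpow h (by norm_num)),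
        max_eq_left (Real.rpow_le_one_of_one_le_of_nonpos h (by linarith)),
        max_eq_left (Real.rpow_le_one_of_one_le_of_nonpos h (by linarith))]
      simpa using Real.one_le_rpow h (by linarith : 0 ≤ p / 2 - κ * (n + 2))
  rw [hscale]
  calc _ = r ^ (m + n + 1) *
        (min 1 (ρ ^ (1 / 2 : ℝ)) ^ p * max 1 (ρ ^ (-κ)) ^ n * max 1 (ρ ^ (-(2 * κ)))) := by ring
    _ ≤ r ^ (m + n + 1) * ρ ^ (p / 2 - κ * (n + 2)) := by gcongr

section Fourier

lemma norm_coe_addCircle_le_abs_sub (T θ : ℝ) (z : ℤ) : ‖(θ : AddCircle T)‖ ≤ |θ - z * T| := by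
  have hcoe : (θ : AddCircle T) = ((θ - z * T : ℝ) : AddCircle T) := by
    rw [AddCircle.coe_sub, ← zsmul_eq_mul, AddCircle.coe_zsmul, AddCircle.coe_period, smul_zero,
      sub_zero]
  rw [hcoe]
  exact QuotientAddGroup.norm_mk_le_norm

lemma one_sub_norm_sq_div_two_le_cos (θ : ℝ) :
    1 - ‖(θ : AddCircle (2 * Real.pi))‖ ^ 2 / 2 ≤ Real.cos θ := by
  rw [AddCircle.norm_eq, sq_abs, ← Real.cos_sub_int_mul_two_pi θ (round ((2 * Real.pi)⁻¹ * θ))]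
  exact Real.one_sub_sq_div_two_le_cos

variable {d : ℕ} (μ : Measure (EuclideanSpace ℝ (Fin d)))

lemma norm_exp_neg_I_mul_ofReal (θ : ℝ) : ‖Complex.exp (-(Complex.I * θ))‖ = 1 := by
  simp [Complex.norm_exp]

lemma stronglyMeasurable_ftM [SFinite μ] : StronglyMeasurable (ftM μ) := by
  unfold ftM
  exact StronglyMeasurable.integral_prod_right (Continuous.stronglyMeasurable (by fun_prop))

lemma norm_ftM_le_one [IsProbabilityMeasure μ] (ζ : EuclideanSpace ℝ (Fin d)) : ‖ftM μ ζ‖ ≤ 1 := by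
  refine (norm_integral_le_of_norm_le_const (C := 1) (.of_forall fun x => ?_)).trans (by simp)
  exact (norm_exp_neg_I_mul_ofReal _).le

lemma one_half_le_norm_ftM [IsProbabilityMeasure μ] {ζ : EuclideanSpace ℝ (Fin d)}
    (h : ∀ᵐ x ∂μ, ‖((∑ i, x i * ζ i : ℝ) : AddCircle (2 * Real.pi))‖ ≤ 1) :
    1 / 2 ≤ ‖ftM μ ζ‖ := by
  have hint : Integrable (fun x : EuclideanSpace ℝ (Fin d) =>
      Complex.exp (-(Complex.I * ((∑ i, x i * ζ i : ℝ) : ℂ)))) μ :=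
    .of_bound (Continuous.aestronglyMeasurable (by fun_prop)) 1
      (.of_forall fun x => (norm_exp_neg_I_mul_ofReal _).le)
  have hre : ∀ θ : ℝ, (Complex.exp (-(Complex.I * θ))).re = Real.cos θ := fun θ => by
    simp [Complex.exp_re]
  calc (1 / 2 : ℝ) = ∫ _, (1 / 2 : ℝ) ∂μ := by simp
    _ ≤ ∫ x, (Complex.exp (-(Complex.I * ((∑ i, x i * ζ i : ℝ) : ℂ)))).re ∂μ := by
        refine integral_mono_ae (integrable_const _) hint.re (h.mono fun x hx => ?_)
        refine le_trans ?_ ((one_sub_norm_sq_div_two_le_cos _).trans_eq (hre _).symm)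
        linarith [pow_le_one₀ (norm_nonneg _) hx (n := 2)]
    _ = (ftM μ ζ).re := integral_re hint
    _ ≤ ‖ftM μ ζ‖ := Complex.re_le_norm _

lemma continuous_hypLift (d m : ℕ) : Continuous (hypLift d m) := by
  refine (EuclideanSpace.equiv (Fin d) ℝ).symm.continuous.comp (continuous_pi fun i => ?_)
  by_cases hi : (i : ℕ) < d - 1
  · simp only [hi, dite_true]
    fun_prop
  · simp only [hi, dite_false, hypQ]
    fun_prop

lemma integrableOn_hypAvg (m : ℕ) [IsProbabilityMeasure μ] (R : ℝ) :
    IntegrableOn (fun ξ => ‖ftM μ (R • hypLift d m ξ)‖ ^ 2 * Real.sqrt (1 + 4 * ‖ξ‖ ^ 2))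
      (ball (0 : EuclideanSpace ℝ (Fin (d - 1))) 1) := by
  have hft : StronglyMeasurable fun ξ => ‖ftM μ (R • hypLift d m ξ)‖ ^ 2 :=
    ((stronglyMeasurable_ftM μ).comp_measurable
      ((continuous_hypLift d m).const_smul R).measurable).norm.pow 2
  have hsqrt : StronglyMeasurable fun ξ : EuclideanSpace ℝ (Fin (d - 1)) =>
      Real.sqrt (1 + 4 * ‖ξ‖ ^ 2) := Continuous.stronglyMeasurable (by fun_prop)
  refine IntegrableOn.of_bound measure_ball_lt_top (hft.mul hsqrt).aestronglyMeasurable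
    (1 ^ 2 * Real.sqrt (1 + 4 * 1 ^ 2)) ((ae_restrict_mem measurableSet_ball).mono fun ξ hξ => ?_)
  rw [Real.norm_of_nonneg (by positivity)]
  have hξ' : ‖ξ‖ ≤ 1 := (mem_ball_zero_iff.1 hξ).le
  gcongr
  exact norm_ftM_le_one μ _

lemma volume_div_four_le_hypAvg {m : ℕ} [IsProbabilityMeasure μ] {R : ℝ}
    {S : Set (EuclideanSpace ℝ (Fin (d - 1)))} (hS : MeasurableSet S) (hS₁ : S ⊆ ball 0 1)
    (h : ∀ ξ ∈ S, ∀ᵐ x ∂μ,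
      ‖((∑ i, x i * (R • hypLift d m ξ) i : ℝ) : AddCircle (2 * Real.pi))‖ ≤ 1) :
    volume.real S / 4 ≤ hypAvg d m μ R := by
  have hint := integrableOn_hypAvg μ m R
  have hS_top : volume S ≠ ⊤ := ne_top_of_le_ne_top measure_ball_lt_top.ne (measure_mono hS₁)
  calc volume.real S / 4 = ∫ _ in S, (1 / 4 : ℝ) := by
        rw [setIntegral_const, smul_eq_mul, mul_one_div]
    _ ≤ ∫ ξ in S, ‖ftM μ (R • hypLift d m ξ)‖ ^ 2 * Real.sqrt (1 + 4 * ‖ξ‖ ^ 2) := by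
        refine setIntegral_mono_on (integrableOn_const hS_top) (hint.mono_set hS₁) hS fun ξ hξ => ?_
        have hft : (1 / 2) ^ 2 ≤ ‖ftM μ (R • hypLift d m ξ)‖ ^ 2 := by
          gcongr
          exact one_half_le_norm_ftM μ (h ξ hξ)
        have hsqrt : 1 ≤ Real.sqrt (1 + 4 * ‖ξ‖ ^ 2) :=
          Real.one_le_sqrt.2 (le_add_of_nonneg_right (by positivity))
        linarith [mul_le_mul hft hsqrt zero_le_one (by positivity)]
    _ ≤ hypAvg d m μ R :=
        setIntegral_mono_set hint (.of_forall fun ξ => by positivity) hS₁.eventuallyLE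

end Fourier

section Phase

variable {R c x t : ℝ}

lemma norm_phase_pair_le {a b : ℝ} (hR : 1 ≤ R) (hc₁ : c ≤ 1) (hx : x ∈ Set.Icc 0 c)
    (ht : t ∈ Set.Icc 0 c) (hab : a - b ∈ Set.Icc 0 (c / R)) (hb : b ∈ Set.Icc 0 c) :
    ‖((x * (R * (a - b)) + t * (R * (a ^ 2 - b ^ 2)) : ℝ) : AddCircle (2 * Real.pi))‖ ≤ 5 * c := by
  obtain ⟨u, rfl⟩ : ∃ u, a = u + b := ⟨a - b, by ring⟩
  rw [add_sub_cancel_right] at hab ⊢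
  have hc₀ : 0 ≤ c := hx.1.trans hx.2
  have hRu₀ : 0 ≤ R * u := mul_nonneg (by linarith) hab.1
  have hRu : R * u ≤ c := (le_div_iff₀' (by linarith)).1 hab.2
  have huc : u ≤ c := hab.2.trans (div_le_self hc₀ hR)
  have hfactor : x * (R * u) + t * (R * ((u + b) ^ 2 - b ^ 2)) =
      (R * u) * (x + t * (u + 2 * b)) := by ring
  have hnonneg : 0 ≤ x + t * (u + 2 * b) :=
    add_nonneg hx.1 (mul_nonneg ht.1 (by linarith [hab.1, hb.1]))
  rw [hfactor]
  calc ‖((R * u * (x + t * (u + 2 * b)) : ℝ) : AddCircle (2 * Real.pi))‖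
      ≤ |R * u * (x + t * (u + 2 * b))| := QuotientAddGroup.norm_mk_le_norm
    _ = R * u * (x + t * (u + 2 * b)) := abs_of_nonneg (mul_nonneg hRu₀ hnonneg)
    _ ≤ c * (1 + 1 * (1 + 2 * 1)) := by
        gcongr <;> linarith [hx.2, ht.1, ht.2, hab.1, hb.1, hb.2]
    _ ≤ 5 * c := by linarith

lemma norm_phase_knapp_le {w : ℝ} (hR : 0 < R) (hc₁ : c ≤ 1) (ht : t ∈ Set.Icc 0 c)
    (hx : x ∈ Set.Icc 0 (c * R ^ (-(1 / 2) : ℝ))) (hw : w ∈ Set.Icc 0 (c * R ^ (-(1 / 2) : ℝ))) :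
    ‖((x * (R * w) + t * (R * w ^ 2) : ℝ) : AddCircle (2 * Real.pi))‖ ≤ 5 * c := by
  have hc₀ : 0 ≤ c := ht.1.trans ht.2
  have hbox : R * (c * R ^ (-(1 / 2) : ℝ)) ^ 2 = c ^ 2 := by
    rw [mul_pow, ← Real.rpow_mul_natCast hR.le]
    norm_num [Real.rpow_neg_one]
    field_simp
  have hproduct : ∀ v ∈ Set.Icc 0 (c * R ^ (-(1 / 2) : ℝ)), 0 ≤ v * (R * w) ∧ v * (R * w) ≤ c := by
    refine fun v hv => ⟨mul_nonneg hv.1 (mul_nonneg hR.le hw.1), ?_⟩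
    calc v * (R * w) = R * (v * w) := by ring
      _ ≤ R * ((c * R ^ (-(1 / 2) : ℝ)) * (c * R ^ (-(1 / 2) : ℝ))) := by
          gcongr
          exacts [hw.1, hv.2, hw.2]
      _ = c * c := by rw [← sq, hbox, sq]
      _ ≤ c := mul_le_of_le_one_right hc₀ hc₁
  have hxw := hproduct x hx
  have hww := hproduct w hw
  have htww : t * (w * (R * w)) ≤ 1 * c := by
    gcongr
    exacts [hww.1, ht.2.trans hc₁, hww.2]
  calc ‖((x * (R * w) + t * (R * w ^ 2) : ℝ) : AddCircle (2 * Real.pi))‖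
      ≤ |x * (R * w) + t * (R * w ^ 2)| := QuotientAddGroup.norm_mk_le_norm
    _ = x * (R * w) + t * (w * (R * w)) := by
        rw [abs_of_nonneg (add_nonneg hxw.1 (mul_nonneg ht.1 (mul_nonneg hR.le (sq_nonneg w))))]
        ring
    _ ≤ 5 * c := by linarith [hxw.2]

lemma norm_phase_comb_le {A B T w : ℝ} (hR : 0 < R) (hc₀ : 0 < c) (hc₁ : c ≤ 1)
    (hA : c / R ≤ A) (hB : c / R ≤ B) (hT : c / R ≤ T)
    (hRAB : R * A * B = 2 * Real.pi) (hRTA : R * T * A ^ 2 = 2 * Real.pi)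
    (hx : x ∈ comb B (c / R) c) (hw : w ∈ comb A (c / R) c) (ht : t ∈ comb T (c / R) c) :
    ‖((x * (R * w) + t * (R * w ^ 2) : ℝ) : AddCircle (2 * Real.pi))‖ ≤ 5 * c := by
  have hA₀ : 0 < A := lt_of_lt_of_le (by positivity) hA
  have hB₀ : 0 < B := lt_of_lt_of_le (by positivity) hB
  have hT₀ : 0 < T := lt_of_lt_of_le (by positivity) hT
  have hx_le := (comb_subset_Ico hB₀ hB hc₀.le hx).2.le
  have hw_le := (comb_subset_Ico hA₀ hA hc₀.le hw).2.le
  have ht_le := (comb_subset_Ico hT₀ hT hc₀.le ht).2.le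
  obtain ⟨l, hl, hl'⟩ := exists_nat_mul_le_of_mem_comb hx
  obtain ⟨k, hk, hk'⟩ := exists_nat_mul_le_of_mem_comb hw
  obtain ⟨j, hj, hj'⟩ := exists_nat_mul_le_of_mem_comb ht
  obtain ⟨u, rfl⟩ : ∃ u, x = B * l + u := ⟨x - B * l, by ring⟩
  obtain ⟨s, rfl⟩ : ∃ s, w = A * k + s := ⟨w - A * k, by ring⟩
  obtain ⟨v, rfl⟩ : ∃ v, t = T * j + v := ⟨t - T * j, by ring⟩
  rw [le_add_iff_nonneg_right] at hl hk hj
  rw [add_le_add_iff_left, le_div_iff₀' hR] at hl' hk' hj'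
  -- Duality of the spacings puts the phase of the lattice points in `2πℤ`.
  have hphase : (B * l + u) * (R * (A * k + s)) + (T * j + v) * (R * (A * k + s) ^ 2) -
      (l * k + j * k ^ 2 : ℤ) * (2 * Real.pi) =
      B * l * (R * s) + R * u * (A * k + s) + (T * j + v) * (R * s * (A * k + (A * k + s))) +
        R * v * (A * k) ^ 2 := by
    push_cast
    linear_combination (l * k : ℝ) * hRAB + (j * k ^ 2 : ℝ) * hRTA
  refine (norm_coe_addCircle_le_abs_sub _ _ (l * k + j * k ^ 2)).trans ?_
  rw [hphase, abs_of_nonneg (by positivity)]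
  calc B * l * (R * s) + R * u * (A * k + s) + (T * j + v) * (R * s * (A * k + (A * k + s))) +
        R * v * (A * k) ^ 2 ≤ 1 * c + c * 1 + 1 * (c * (1 + 1)) + c * 1 ^ 2 := by
        gcongr <;> linarith
    _ = 5 * c := by ring

end Phase

section Coordinates

lemma hypQ_add_add_one (a m : ℕ) (ξ : EuclideanSpace ℝ (Fin (a + m))) :
    hypQ (a + m + 1) m ξ = ∑ i, ξ (Fin.castAdd m i) ^ 2 - ∑ j, ξ (Fin.natAdd a j) ^ 2 := by
  change ∑ i : Fin (a + m), (if (i : ℕ) < a + m + 1 - 1 - m then (1 : ℝ) else -1) * ξ i ^ 2 = _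
  simp [Fin.sum_univ_add, sub_eq_add_neg]

lemma sum_mul_smul_hypLift (N m : ℕ) (R : ℝ) (x : EuclideanSpace ℝ (Fin (N + 1)))
    (ξ : EuclideanSpace ℝ (Fin N)) :
    ∑ i, x i * (R • hypLift (N + 1) m ξ) i =
      ∑ i : Fin N, x i.castSucc * (R * ξ i) + x (Fin.last N) * (R * hypQ (N + 1) m ξ) := by
  rw [Fin.sum_univ_castSucc]
  simp [hypLift]

variable {m p n : ℕ}

/-- Indices of the positive directions of the quadratic form: `m` of them are paired with the
negative directions, `p` carry Knapp boxes and `n` carry combs. -/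
abbrev PosIdx (m p n : ℕ) : Type := Fin m ⊕ Fin p ⊕ Fin n

/-- The positive directions followed by the `m` negative ones, as coordinates of `ℝ^{d-1}` with
`d = m + (p + n) + m + 1`. -/
def coordEquiv (m p n : ℕ) : PosIdx m p n ⊕ Fin m ≃ Fin (m + (p + n) + m) :=
  (((Equiv.refl _).sumCongr finSumFinEquiv).trans finSumFinEquiv |>.sumCongr (Equiv.refl _)).trans
    finSumFinEquiv

lemma hypQ_coordEquiv (ξ : EuclideanSpace ℝ (Fin (m + (p + n) + m))) :
    hypQ (m + (p + n) + m + 1) m ξ =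
      ∑ i, ξ (coordEquiv m p n (.inl i)) ^ 2 - ∑ j, ξ (coordEquiv m p n (.inr j)) ^ 2 := by
  rw [hypQ_add_add_one, ← ((Equiv.refl _).sumCongr finSumFinEquiv |>.trans finSumFinEquiv).sum_comp]
  rfl

/-- The point of `ℝ^d` with the given entries in the positive directions and in the last
coordinate (index `none`), the `m` negative directions repeating, with opposite sign, the entries
of the directions they are paired with. -/
def antidiagonalEmbed (z : Option (PosIdx m p n) → ℝ) :
    EuclideanSpace ℝ (Fin (m + (p + n) + m + 1)) :=
  WithLp.toLp 2 <| Fin.snoc (α := fun _ => ℝ)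
    (fun i => Sum.elim (fun i => z (some i)) (fun j => -z (some (.inl j)))
      ((coordEquiv m p n).symm i)) (z none)

lemma antidiagonalEmbed_castSucc_inl (z : Option (PosIdx m p n) → ℝ) (i : PosIdx m p n) :
    antidiagonalEmbed z (coordEquiv m p n (.inl i)).castSucc = z (some i) := by
  simp [antidiagonalEmbed]

lemma antidiagonalEmbed_castSucc_inr (z : Option (PosIdx m p n) → ℝ) (j : Fin m) :
    antidiagonalEmbed z (coordEquiv m p n (.inr j)).castSucc = -z (some (.inl j)) := by
  simp [antidiagonalEmbed]

lemma antidiagonalEmbed_last (z : Option (PosIdx m p n) → ℝ) :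
    antidiagonalEmbed z (Fin.last _) = z none := by
  simp [antidiagonalEmbed]

lemma forall_fin_coordEquiv {P : Fin (m + (p + n) + m + 1) → Prop} :
    (∀ i, P i) ↔ ((∀ i, P (coordEquiv m p n (.inl i)).castSucc) ∧
      ∀ j, P (coordEquiv m p n (.inr j)).castSucc) ∧ P (Fin.last _) := by
  rw [Fin.forall_fin_succ', (coordEquiv m p n).symm.forall_congr_left]
  simp [Sum.forall]

lemma continuous_antidiagonalEmbed : Continuous (antidiagonalEmbed (m := m) (p := p) (n := n)) := by
  refine (PiLp.continuous_toLp 2 _).comp (continuous_pi ?_)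
  change ∀ i, Continuous fun z => antidiagonalEmbed z i
  rw [forall_fin_coordEquiv]
  simp only [antidiagonalEmbed_castSucc_inl, antidiagonalEmbed_castSucc_inr,
    antidiagonalEmbed_last]
  refine ⟨⟨fun i => ?_, fun j => ?_⟩, ?_⟩ <;> fun_prop

lemma norm_le_card_mul_of_forall_abs_le {ι : Type*} [Fintype ι] {x : EuclideanSpace ℝ ι} {c : ℝ}
    (h : ∀ i, |x i| ≤ c) : ‖x‖ ≤ Fintype.card ι * c := by
  classical
  have hsum : x = ∑ i, EuclideanSpace.single i (x i) := by
    ext i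
    simp
  calc ‖x‖ ≤ ∑ i, ‖EuclideanSpace.single i (x i)‖ := (congrArg norm hsum).trans_le (norm_sum_le _ _)
    _ ≤ ∑ _ : ι, c := Finset.sum_le_sum fun i _ => by simpa using h i
    _ = Fintype.card ι * c := by simp

lemma norm_antidiagonalEmbed_le {z : Option (PosIdx m p n) → ℝ} {c : ℝ} (h : ∀ o, |z o| ≤ c) :
    ‖antidiagonalEmbed z‖ ≤ (m + (p + n) + m + 1 : ℕ) * c := by
  refine (norm_le_card_mul_of_forall_abs_le ?_).trans_eq (by rw [Fintype.card_fin])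
  rw [forall_fin_coordEquiv]
  simp only [antidiagonalEmbed_castSucc_inl, antidiagonalEmbed_castSucc_inr,
    antidiagonalEmbed_last, abs_neg]
  exact ⟨⟨fun i => h _, fun j => h _⟩, h _⟩

lemma antidiagonalEmbed_preimage_closedBall_subset (x : EuclideanSpace ℝ (Fin _)) {r : ℝ}
    (hr : 0 ≤ r) :
    antidiagonalEmbed ⁻¹' closedBall x r ⊆
      closedBall (fun o : Option (PosIdx m p n) =>
        x (o.elim (Fin.last _) fun i => (coordEquiv m p n (.inl i)).castSucc)) r := by
  intro z hz
  refine (dist_pi_le_iff hr).2 fun o => ?_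
  have hcoord (i) : dist (antidiagonalEmbed z i) (x i) ≤ r := by
    rw [Real.dist_eq, ← Real.norm_eq_abs, ← PiLp.sub_apply]
    exact (PiLp.norm_apply_le _ i).trans (mem_closedBall_iff_norm.1 hz)
  rcases o with _ | i
  · simpa only [antidiagonalEmbed_last, Option.elim] using hcoord (Fin.last _)
  · simpa only [antidiagonalEmbed_castSucc_inl, Option.elim] using
      hcoord (coordEquiv m p n (.inl i)).castSucc

lemma sum_antidiagonalEmbed_mul_smul_hypLift (R : ℝ) (z : Option (PosIdx m p n) → ℝ)
    (ξ : EuclideanSpace ℝ (Fin (m + (p + n) + m))) :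
    let η := ξ ∘ coordEquiv m p n
    ∑ i, antidiagonalEmbed z i * (R • hypLift (m + (p + n) + m + 1) m ξ) i =
      ∑ j, (z (some (.inl j)) * (R * (η (.inl (.inl j)) - η (.inr j))) +
        z none * (R * (η (.inl (.inl j)) ^ 2 - η (.inr j) ^ 2))) +
      ∑ i, (z (some (.inr i)) * (R * η (.inl (.inr i))) +
        z none * (R * η (.inl (.inr i)) ^ 2)) := by
  intro η
  rw [sum_mul_smul_hypLift, ← (coordEquiv m p n).sum_comp, hypQ_coordEquiv]
  simp only [antidiagonalEmbed_castSucc_inl, antidiagonalEmbed_castSucc_inr,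
    antidiagonalEmbed_last, Fintype.sum_sum_type, Finset.sum_add_distrib, ← Finset.mul_sum,
    mul_sub, Finset.sum_sub_distrib, neg_mul, Finset.sum_neg_distrib, Function.comp_apply, η]
  ring

end Coordinates

/-- Constraints on the size `c` of the boxes, the frequency scale `R` and the comb exponent `κ`
under which every comb below has at least one tooth. -/
structure AdmissibleScale (c R κ : ℝ) : Prop where
  pos : 0 < c
  le_one : c ≤ 1
  one_lt : 1 < R
  exponent_nonneg : 0 ≤ κ
  exponent_le : κ ≤ 1 / 4
  two_pi_div_le : 2 * Real.pi / c ^ 3 ≤ R ^ (1 / 2 : ℝ)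

section AdmissibleScale

variable {c R κ : ℝ} (h : AdmissibleScale c R κ)
include h

lemma AdmissibleScale.scale_pos : 0 < R := one_pos.trans h.one_lt

lemma AdmissibleScale.mul_rpow_sub_one_le {q σ : ℝ} (hq : q ≤ 2 * Real.pi / c ^ 2)
    (hσ : σ ≤ 1 / 2) : q * R ^ (σ - 1) ≤ c := by
  have hR := h.scale_pos
  have hc := h.pos
  calc q * R ^ (σ - 1) ≤ 2 * Real.pi / c ^ 2 * R ^ (-(1 / 2) : ℝ) := by
        gcongr
        exacts [h.one_lt.le, by linarith]
    _ = c * (2 * Real.pi / c ^ 3) / R ^ (1 / 2 : ℝ) := by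
        rw [Real.rpow_neg hR.le]
        field_simp
    _ ≤ c * R ^ (1 / 2 : ℝ) / R ^ (1 / 2 : ℝ) := by
        gcongr
        exact h.two_pi_div_le
    _ = c := mul_div_cancel_right₀ _ (by positivity)

lemma AdmissibleScale.mul_rpow_neg_le {σ : ℝ} (hσ : 0 ≤ σ) : c * R ^ (-σ) ≤ c :=
  mul_le_of_le_one_right h.pos.le
    (Real.rpow_le_one_of_one_le_of_nonpos h.one_lt.le (neg_nonpos.2 hσ))

lemma AdmissibleScale.div_pos : 0 < c / R := _root_.div_pos h.pos h.scale_pos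

lemma AdmissibleScale.div_le : c / R ≤ c := div_le_self h.pos.le h.one_lt.le

lemma AdmissibleScale.two_pi_div_le_two_pi_div_sq : 2 * Real.pi / c ≤ 2 * Real.pi / c ^ 2 := by
  have hc := h.pos
  gcongr
  exact pow_le_of_le_one h.pos.le h.le_one two_ne_zero

lemma AdmissibleScale.one_le_two_pi_div : 1 ≤ 2 * Real.pi / c :=
  (one_le_div h.pos).2 (by linarith [h.le_one, Real.two_le_pi])

end AdmissibleScale

section Boxes

variable {m p n : ℕ} {c R κ : ℝ}

/-- The sides of the physical box in the paired, Knapp and comb directions and in the last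
coordinate. -/
def physBox (c R κ : ℝ) : Option (PosIdx m p n) → Set ℝ
  | some (.inl _) => Set.Ico 0 c
  | some (.inr (.inl _)) => Set.Ico 0 (c * R ^ (-(1 / 2) : ℝ))
  | some (.inr (.inr _)) => comb (2 * Real.pi / c * R ^ (κ - 1)) (c / R) c
  | none => comb (2 * Real.pi / c ^ 2 * R ^ (2 * κ - 1)) (c / R) c

/-- The sides of the frequency box in the coordinates where each paired positive direction is
replaced by its difference with the corresponding negative direction. The comb spacing is dual
to those of `physBox`. -/
def freqBox (c R κ : ℝ) : PosIdx m p n ⊕ Fin m → Set ℝ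
  | .inl (.inl _) => Set.Ico 0 (c / R)
  | .inl (.inr (.inl _)) => Set.Ico 0 (c * R ^ (-(1 / 2) : ℝ))
  | .inl (.inr (.inr _)) => comb (c * R ^ (-κ)) (c / R) c
  | .inr _ => Set.Ico 0 c

/-- The concentration function of each side of `physBox`, up to a constant. -/
def physGrowth (R κ r : ℝ) : Option (PosIdx m p n) → ℝ
  | some (.inl _) => r
  | some (.inr (.inl _)) => min 1 ((r ^ 2 * R) ^ (1 / 2 : ℝ))
  | some (.inr (.inr _)) => r * max 1 ((r ^ 2 * R) ^ (-κ))
  | none => r * max 1 ((r ^ 2 * R) ^ (-(2 * κ)))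

/-- The length of each side of `freqBox`, up to a constant. -/
def freqWidth (R κ : ℝ) : PosIdx m p n ⊕ Fin m → ℝ
  | .inl (.inl _) => R ^ (-1 : ℝ)
  | .inl (.inr (.inl _)) => R ^ (-(1 / 2) : ℝ)
  | .inl (.inr (.inr _)) => R ^ (κ - 1)
  | .inr _ => 1

lemma measurableSet_physBox : ∀ o : Option (PosIdx m p n), MeasurableSet (physBox c R κ o)
  | some (.inl _) => measurableSet_Ico
  | some (.inr (.inl _)) => measurableSet_Ico
  | some (.inr (.inr _)) => measurableSet_comb
  | none => measurableSet_comb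

lemma measurableSet_freqBox : ∀ i : PosIdx m p n ⊕ Fin m, MeasurableSet (freqBox c R κ i)
  | .inl (.inl _) => measurableSet_Ico
  | .inl (.inr (.inl _)) => measurableSet_Ico
  | .inl (.inr (.inr _)) => measurableSet_comb
  | .inr _ => measurableSet_Ico

section Spacing

variable (h : AdmissibleScale c R κ)
include h

lemma AdmissibleScale.div_le_comb_spacing : c / R ≤ 2 * Real.pi / c * R ^ (κ - 1) :=
  div_le_mul_rpow_sub_one h.one_lt.le (h.le_one.trans h.one_le_two_pi_div)
    (zero_le_one.trans h.one_le_two_pi_div) h.exponent_nonneg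

lemma AdmissibleScale.div_le_last_spacing : c / R ≤ 2 * Real.pi / c ^ 2 * R ^ (2 * κ - 1) :=
  have hq := h.one_le_two_pi_div.trans h.two_pi_div_le_two_pi_div_sq
  div_le_mul_rpow_sub_one h.one_lt.le (h.le_one.trans hq) (zero_le_one.trans hq)
    (mul_nonneg zero_le_two h.exponent_nonneg)

lemma AdmissibleScale.div_le_freq_spacing : c / R ≤ c * R ^ (-κ) := by
  simpa using div_le_mul_rpow_sub_one h.one_lt.le le_rfl h.pos.le
    (by linarith [h.exponent_le] : 0 ≤ 1 - κ)

lemma AdmissibleScale.comb_spacing_le : 2 * Real.pi / c * R ^ (κ - 1) ≤ c :=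
  h.mul_rpow_sub_one_le h.two_pi_div_le_two_pi_div_sq (by linarith [h.exponent_le])

lemma AdmissibleScale.last_spacing_le : 2 * Real.pi / c ^ 2 * R ^ (2 * κ - 1) ≤ c :=
  h.mul_rpow_sub_one_le le_rfl (by linarith [h.exponent_le])

end Spacing

lemma physBox_subset_Ico (h : AdmissibleScale c R κ) :
    ∀ o : Option (PosIdx m p n), physBox c R κ o ⊆ Set.Ico 0 c
  | some (.inl _) => subset_rfl
  | some (.inr (.inl _)) => Set.Ico_subset_Ico_right (h.mul_rpow_neg_le (by norm_num))
  | some (.inr (.inr _)) =>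
      comb_subset_Ico (h.div_pos.trans_le h.div_le_comb_spacing) h.div_le_comb_spacing h.pos.le
  | none =>
      comb_subset_Ico (h.div_pos.trans_le h.div_le_last_spacing) h.div_le_last_spacing h.pos.le

lemma freqBox_subset_Ico (h : AdmissibleScale c R κ) :
    ∀ i : PosIdx m p n ⊕ Fin m, freqBox c R κ i ⊆ Set.Ico 0 c
  | .inl (.inl _) => Set.Ico_subset_Ico_right h.div_le
  | .inl (.inr (.inl _)) => Set.Ico_subset_Ico_right (h.mul_rpow_neg_le (by norm_num))
  | .inl (.inr (.inr _)) =>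
      comb_subset_Ico (h.div_pos.trans_le h.div_le_freq_spacing) h.div_le_freq_spacing h.pos.le
  | .inr _ => subset_rfl

lemma volume_physBox_ne_zero (h : AdmissibleScale c R κ) (o : Option (PosIdx m p n)) :
    volume (physBox c R κ o) ≠ 0 := by
  have hc := h.pos
  have hR := h.scale_pos
  rcases o with _ | _ | _ | _
  · refine (lt_of_lt_of_le ?_ (ofReal_le_volume_comb (by positivity) (by positivity)
      h.div_le_last_spacing h.last_spacing_le)).ne'
    rw [ENNReal.ofReal_pos]
    positivity
  · simpa [physBox] using hc
  · simp only [physBox, Real.volume_Ico, sub_zero, ne_eq, ENNReal.ofReal_eq_zero, not_le]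
    positivity
  · refine (lt_of_lt_of_le ?_ (ofReal_le_volume_comb (by positivity) (by positivity)
      h.div_le_comb_spacing h.comb_spacing_le)).ne'
    rw [ENNReal.ofReal_pos]
    positivity

lemma ofReal_freqWidth_le_volume_freqBox (h : AdmissibleScale c R κ) (i : PosIdx m p n ⊕ Fin m) :
    ENNReal.ofReal (c / 2 * freqWidth R κ i) ≤ volume (freqBox c R κ i) := by
  have hc := h.pos
  have hR := h.scale_pos
  have hhalf (v : ℝ) (hv : 0 ≤ v) : ENNReal.ofReal (c / 2 * v) ≤ volume (Set.Ico 0 (c * v)) := by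
    rw [Real.volume_Ico, sub_zero]
    gcongr
    linarith
  rcases i with (_ | _ | _) | _
  · simpa only [freqBox, freqWidth, div_eq_mul_inv, Real.rpow_neg_one] using
      hhalf R⁻¹ (by positivity)
  · exact hhalf _ (Real.rpow_nonneg hR.le _)
  · refine le_of_eq_of_le (congrArg ENNReal.ofReal ?_) (ofReal_le_volume_comb (by positivity)
      (by positivity) h.div_le_freq_spacing (h.mul_rpow_neg_le h.exponent_nonneg))
    rw [freqWidth, Real.rpow_sub_one hR.ne', Real.rpow_neg hR.le]
    field_simp
  · simpa only [freqBox, freqWidth, mul_one] using hhalf 1 zero_le_one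

lemma physGrowth_nonneg {r : ℝ} (hR : 0 ≤ R) (hr : 0 ≤ r) (o : Option (PosIdx m p n)) :
    0 ≤ physGrowth R κ r o := by
  rcases o with _ | _ | _ | _ <;> simp only [physGrowth] <;> positivity

lemma freqWidth_nonneg (hR : 0 ≤ R) (i : PosIdx m p n ⊕ Fin m) : 0 ≤ freqWidth R κ i := by
  rcases i with (_ | _ | _) | _ <;> simp only [freqWidth] <;> positivity

lemma hasBallGrowth_physBox (h : AdmissibleScale c R κ) (o : Option (PosIdx m p n)) :
    HasBallGrowth (physBox c R κ o) fun r => 16 * Real.pi / c ^ 4 * physGrowth R κ r o := by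
  have hc := h.pos
  have hc₁ := h.le_one
  have hR := h.scale_pos
  have hq := h.one_le_two_pi_div
  have hpow {k : ℕ} (hk : k ≤ 4) : 16 * Real.pi / c ^ k ≤ 16 * Real.pi / c ^ 4 := by
    gcongr 16 * Real.pi / ?_
    exact pow_le_pow_of_le_one hc.le hc₁ hk
  have hconst : 2 / c ≤ 16 * Real.pi / c ^ 4 := by
    refine le_trans ?_ (hpow (k := 1) (by norm_num))
    rw [pow_one]
    gcongr
    linarith [Real.two_le_pi]
  rcases o with _ | _ | _ | _
  · refine (hasBallGrowth_comb_rpow h.one_lt hc hc₁ (hq.trans h.two_pi_div_le_two_pi_div_sq)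
      (mul_nonneg zero_le_two h.exponent_nonneg) (by linarith [h.exponent_le])
      h.last_spacing_le).mono fun r hr => le_of_eq ?_
    rw [physGrowth]
    field_simp
    norm_num
  · refine (hasBallGrowth_Ico hc).mono fun r hr => (min_le_right _ _).trans ?_
    rw [mul_div_right_comm]
    gcongr
    exact le_rfl
  · refine (hasBallGrowth_Ico_rpow hR hc (by linarith)).mono fun r hr => ?_
    exact mul_le_mul_of_nonneg_right hconst (by positivity)
  · refine (hasBallGrowth_comb_rpow h.one_lt hc hc₁ hq h.exponent_nonneg
      (by linarith [h.exponent_le]) h.comb_spacing_le).mono fun r hr => ?_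
    refine mul_le_mul_of_nonneg_right (le_of_eq_of_le ?_ (hpow (k := 3) (by norm_num)))
      (by positivity)
    field_simp
    norm_num

lemma prod_physGrowth_le_rpow {r : ℝ} (hR : 0 < R) (hr : 0 < r) (hκ₀ : 0 ≤ κ)
    (hκ : 2 * κ * (n + 2) ≤ p) :
    ∏ o : Option (PosIdx m p n), physGrowth R κ r o ≤
      R ^ (p / 2 - κ * (n + 2)) * r ^ (m + p + n + 1 - 2 * κ * (n + 2)) := by
  refine le_of_eq_of_le ?_ (prod_growth_le_rpow hR hr hκ₀ hκ)
  simp only [Fintype.prod_option, Fintype.prod_sum_type, physGrowth, Finset.prod_const,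
    Finset.card_univ, Fintype.card_fin]
  ring

lemma prod_freqWidth (hR : 0 < R) :
    ∏ i : PosIdx m p n ⊕ Fin m, freqWidth R κ i = R ^ (-(m + p / 2 + (1 - κ) * n)) := by
  simp only [Fintype.prod_sum_type, freqWidth, Finset.prod_const, Finset.card_univ,
    Fintype.card_fin, one_pow, mul_one, ← Real.rpow_mul_natCast hR.le, ← Real.rpow_add hR]
  ring_nf

end Boxes

section FrequencySet

lemma volume_setOf_mulVec_mem {ι κ : Type*} [Fintype ι] [Fintype κ] [DecidableEq κ] (e : κ ≃ ι)
    {A : Matrix κ κ ℝ} (hA : A.det = 1) {F : κ → Set ℝ} (hF : ∀ i, MeasurableSet (F i)) :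
    volume {ξ : EuclideanSpace ℝ ι | ∀ i, A.mulVec (ξ ∘ e) i ∈ F i} = ∏ i, volume (F i) := by
  have hA_pres : MeasurePreserving (Matrix.toLin' A) := by
    refine ⟨(LinearMap.continuous_on_pi _).measurable, ?_⟩
    rw [Real.map_matrix_volume_pi_eq_smul_volume_pi (by simp [hA]), hA]
    simp
  have hpres := hA_pres.comp ((volume_measurePreserving_piCongrLeft (fun _ => ℝ) e).symm.comp
    (PiLp.volume_preserving_ofLp ι))
  rw [← volume_pi_pi, ← hpres.measure_preimage (MeasurableSet.univ_pi hF).nullMeasurableSet]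
  congr 1
  exact Set.ext fun ξ => Set.mem_univ_pi.symm

variable {m p n : ℕ} {c R κ : ℝ}

/-- The unimodular substitution replacing each paired positive coordinate by its difference with
the corresponding negative coordinate. -/
def pairShear (m p n : ℕ) : Matrix (PosIdx m p n ⊕ Fin m) (PosIdx m p n ⊕ Fin m) ℝ :=
  Matrix.fromBlocks 1 (-Matrix.fromRows 1 0) 0 1

lemma det_pairShear : (pairShear m p n).det = 1 := by
  simp [pairShear]

lemma pairShear_mulVec_paired (η : PosIdx m p n ⊕ Fin m → ℝ) (j : Fin m) :
    (pairShear m p n).mulVec η (.inl (.inl j)) = η (.inl (.inl j)) - η (.inr j) := by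
  simp [pairShear, Matrix.fromBlocks_mulVec, Matrix.neg_mulVec, Matrix.fromRows_mulVec,
    sub_eq_add_neg]

lemma pairShear_mulVec_unpaired (η : PosIdx m p n ⊕ Fin m → ℝ) (i : Fin p ⊕ Fin n) :
    (pairShear m p n).mulVec η (.inl (.inr i)) = η (.inl (.inr i)) := by
  simp [pairShear, Matrix.fromBlocks_mulVec, Matrix.neg_mulVec, Matrix.fromRows_mulVec]

lemma pairShear_mulVec_negative (η : PosIdx m p n ⊕ Fin m → ℝ) (j : Fin m) :
    (pairShear m p n).mulVec η (.inr j) = η (.inr j) := by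
  simp [pairShear, Matrix.fromBlocks_mulVec]

/-- The frequencies at which the Fourier transform of a measure carried by `physBox` does not
decay. -/
def freqSet (m p n : ℕ) (c R κ : ℝ) : Set (EuclideanSpace ℝ (Fin (m + (p + n) + m))) :=
  {ξ | ∀ i, (pairShear m p n).mulVec (ξ ∘ coordEquiv m p n) i ∈ freqBox c R κ i}

lemma mem_freqSet {ξ : EuclideanSpace ℝ (Fin (m + (p + n) + m))} :
    ξ ∈ freqSet m p n c R κ ↔
      ((∀ j, ξ (coordEquiv m p n (.inl (.inl j))) - ξ (coordEquiv m p n (.inr j)) ∈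
          Set.Ico 0 (c / R)) ∧
        ∀ i, ξ (coordEquiv m p n (.inl (.inr i))) ∈ freqBox (m := m) c R κ (.inl (.inr i))) ∧
      ∀ j, ξ (coordEquiv m p n (.inr j)) ∈ Set.Ico 0 c := by
  change (∀ i, (pairShear m p n).mulVec (ξ ∘ coordEquiv m p n) i ∈ freqBox c R κ i) ↔ _
  rw [Sum.forall, Sum.forall]
  simp only [pairShear_mulVec_paired, pairShear_mulVec_unpaired, pairShear_mulVec_negative]
  rfl

lemma measurableSet_freqSet : MeasurableSet (freqSet m p n c R κ) := by
  have hmeas (i) : Measurable fun ξ : EuclideanSpace ℝ (Fin (m + (p + n) + m)) =>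
      (pairShear m p n).mulVec (ξ ∘ coordEquiv m p n) i := by
    simp only [Matrix.mulVec, dotProduct, Function.comp_apply]
    fun_prop
  rw [freqSet, Set.ofPred_forall]
  exact .iInter fun i => hmeas i (measurableSet_freqBox i)

lemma rpow_le_volume_freqSet (h : AdmissibleScale c R κ) :
    (c / 2) ^ (m + (p + n) + m) * R ^ (-(m + p / 2 + (1 - κ) * n)) ≤
      volume.real (freqSet m p n c R κ) := by
  have hside (i : PosIdx m p n ⊕ Fin m) :
      c / 2 * freqWidth R κ i ≤ (volume (freqBox c R κ i)).toReal := by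
    refine (ENNReal.ofReal_le_iff_le_toReal ?_).1 (ofReal_freqWidth_le_volume_freqBox h i)
    exact measure_ne_top_of_subset (freqBox_subset_Ico h i) measure_Ico_lt_top.ne
  calc (c / 2) ^ (m + (p + n) + m) * R ^ (-(m + p / 2 + (1 - κ) * n))
      = ∏ i : PosIdx m p n ⊕ Fin m, c / 2 * freqWidth R κ i := by
        rw [Finset.prod_mul_distrib, prod_freqWidth h.scale_pos, Finset.prod_const,
          Finset.card_univ, Fintype.card_congr (coordEquiv m p n), Fintype.card_fin]
    _ ≤ ∏ i, (volume (freqBox c R κ i)).toReal :=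
        Finset.prod_le_prod (fun i _ => mul_nonneg (half_pos h.pos).le
          (freqWidth_nonneg h.scale_pos.le i)) fun i _ => hside i
    _ = volume.real (freqSet m p n c R κ) := by
        rw [← ENNReal.toReal_prod, measureReal_def, freqSet,
          volume_setOf_mulVec_mem _ det_pairShear measurableSet_freqBox]

lemma freqSet_subset_ball (h : AdmissibleScale c R κ) (hc : (m + (p + n) + m : ℕ) * (2 * c) < 1) :
    freqSet m p n c R κ ⊆ ball 0 1 := by
  intro ξ hξ
  obtain ⟨⟨hpaired, hunpaired⟩, hneg⟩ := mem_freqSet.1 hξ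
  have hcoord (i) : |ξ (coordEquiv m p n i)| ≤ 2 * c := by
    rw [abs_le]
    rcases i with (j | i) | j
    · constructor <;>
        linarith [(hpaired j).1, (hpaired j).2, h.div_le, (hneg j).1, (hneg j).2]
    · have hw := freqBox_subset_Ico h _ (hunpaired i)
      constructor <;> linarith [hw.1, hw.2]
    · constructor <;> linarith [(hneg j).1, (hneg j).2]
  refine mem_ball_zero_iff.2 (lt_of_le_of_lt ?_ hc)
  refine (norm_le_card_mul_of_forall_abs_le ?_).trans_eq (by rw [Fintype.card_fin])
  exact (coordEquiv m p n).forall_congr_right.1 hcoord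

end FrequencySet

section KnappCombMeasure

variable {m p n : ℕ} {c R κ : ℝ}

lemma AdmissibleScale.norm_phase_comb_le (h : AdmissibleScale c R κ) {x t w : ℝ}
    (hx : x ∈ comb (2 * Real.pi / c * R ^ (κ - 1)) (c / R) c)
    (ht : t ∈ comb (2 * Real.pi / c ^ 2 * R ^ (2 * κ - 1)) (c / R) c)
    (hw : w ∈ comb (c * R ^ (-κ)) (c / R) c) :
    ‖((x * (R * w) + t * (R * w ^ 2) : ℝ) : AddCircle (2 * Real.pi))‖ ≤ 5 * c := by
  have hc := h.pos
  have hR := h.scale_pos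
  refine _root_.norm_phase_comb_le hR hc h.le_one h.div_le_freq_spacing h.div_le_comb_spacing
    h.div_le_last_spacing ?_ ?_ hx hw ht
  · rw [Real.rpow_sub_one hR.ne', Real.rpow_neg hR.le]
    field_simp
  · rw [Real.rpow_sub_one hR.ne', Real.rpow_neg hR.le, mul_comm 2 κ, Real.rpow_mul hR.le,
      Real.rpow_ofNat]
    field_simp

lemma norm_sum_antidiagonalEmbed_mul_le (h : AdmissibleScale c R κ)
    {z : Option (PosIdx m p n) → ℝ} (hz : ∀ o, z o ∈ physBox c R κ o)
    {ξ : EuclideanSpace ℝ (Fin (m + (p + n) + m))} (hξ : ξ ∈ freqSet m p n c R κ) :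
    ‖((∑ i, antidiagonalEmbed z i * (R • hypLift (m + (p + n) + m + 1) m ξ) i : ℝ) :
      AddCircle (2 * Real.pi))‖ ≤ (m + (p + n) : ℕ) * (5 * c) := by
  obtain ⟨⟨hpaired, hunpaired⟩, hneg⟩ := mem_freqSet.1 hξ
  have hlast := Set.Ico_subset_Icc_self (physBox_subset_Ico h none (hz none))
  have hpair (j) := norm_phase_pair_le h.one_lt.le h.le_one
    (Set.Ico_subset_Icc_self (hz (some (.inl j)))) hlast
    (Set.Ico_subset_Icc_self (hpaired j)) (Set.Ico_subset_Icc_self (hneg j))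
  have hunpair (i : Fin p ⊕ Fin n) :
      ‖((z (some (.inr i)) * (R * ξ (coordEquiv m p n (.inl (.inr i)))) +
        z none * (R * ξ (coordEquiv m p n (.inl (.inr i))) ^ 2) : ℝ) :
          AddCircle (2 * Real.pi))‖ ≤ 5 * c := by
    rcases i with i | i
    · exact norm_phase_knapp_le h.scale_pos h.le_one hlast
        (Set.Ico_subset_Icc_self (hz (some (.inr (.inl i)))))
        (Set.Ico_subset_Icc_self (hunpaired (.inl i)))
    · exact h.norm_phase_comb_le (hz (some (.inr (.inr i)))) (hz none) (hunpaired (.inr i))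
  have hcoe {ι : Type} (s : Finset ι) (f : ι → ℝ) :
      ((∑ i ∈ s, f i : ℝ) : AddCircle (2 * Real.pi)) = ∑ i ∈ s, (f i : AddCircle (2 * Real.pi)) :=
    map_sum (QuotientAddGroup.mk' _) f s
  rw [sum_antidiagonalEmbed_mul_smul_hypLift, AddCircle.coe_add, hcoe, hcoe]
  refine (norm_add_le_of_le (norm_sum_le_of_le _ fun j _ => hpair j)
    (norm_sum_le_of_le _ fun i _ => hunpair i)).trans_eq ?_
  simp only [Finset.sum_const, Finset.card_univ, Fintype.card_sum, Fintype.card_fin,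
    nsmul_eq_mul]
  push_cast
  ring

/-- The image under `antidiagonalEmbed` of normalized volume on `physBox`. -/
def knappCombMeasure (m p n : ℕ) (c R κ : ℝ) :
    Measure (EuclideanSpace ℝ (Fin (m + (p + n) + m + 1))) :=
  (ProbabilityTheory.cond volume (Set.univ.pi (physBox c R κ))).map
    (antidiagonalEmbed (m := m) (p := p) (n := n))

lemma measurableSet_pi_physBox :
    MeasurableSet (Set.univ.pi (physBox (m := m) (p := p) (n := n) c R κ)) :=
  .univ_pi measurableSet_physBox

lemma volume_pi_physBox_ne_zero (h : AdmissibleScale c R κ) :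
    volume (Set.univ.pi (physBox (m := m) (p := p) (n := n) c R κ)) ≠ 0 := by
  rw [volume_pi_pi]
  exact Finset.prod_ne_zero_iff.2 fun o _ => volume_physBox_ne_zero h o

lemma volume_pi_physBox_ne_top (h : AdmissibleScale c R κ) :
    volume (Set.univ.pi (physBox (m := m) (p := p) (n := n) c R κ)) ≠ ⊤ := by
  rw [volume_pi_pi]
  exact ENNReal.prod_ne_top fun o _ =>
    measure_ne_top_of_subset (physBox_subset_Ico h o) measure_Ico_lt_top.ne

lemma isProbabilityMeasure_knappCombMeasure (h : AdmissibleScale c R κ) :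
    IsProbabilityMeasure (knappCombMeasure m p n c R κ) :=
  have := ProbabilityTheory.cond_isProbabilityMeasure_of_finite
    (volume_pi_physBox_ne_zero (m := m) (p := p) (n := n) h) (volume_pi_physBox_ne_top h)
  Measure.isProbabilityMeasure_map continuous_antidiagonalEmbed.aemeasurable

lemma ae_knappCombMeasure {P : EuclideanSpace ℝ (Fin (m + (p + n) + m + 1)) → Prop}
    (hP : MeasurableSet {x | P x})
    (h : ∀ z, (∀ o, z o ∈ physBox c R κ o) → P (antidiagonalEmbed z)) :
    ∀ᵐ x ∂knappCombMeasure m p n c R κ, P x := by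
  refine (ae_map_iff continuous_antidiagonalEmbed.aemeasurable hP).2 ?_
  exact (ProbabilityTheory.ae_cond_mem measurableSet_pi_physBox).mono
    fun z hz => h z (Set.mem_univ_pi.1 hz)

lemma knappCombMeasure_compl_closedBall (h : AdmissibleScale c R κ)
    (hc : (m + (p + n) + m + 1 : ℕ) * c ≤ 1) :
    knappCombMeasure m p n c R κ (closedBall 0 1)ᶜ = 0 := by
  refine ae_knappCombMeasure measurableSet_closedBall fun z hz => ?_
  refine mem_closedBall_zero_iff.2 ((norm_antidiagonalEmbed_le fun o => ?_).trans hc)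
  have hzo := physBox_subset_Ico h o (hz o)
  exact (abs_of_nonneg hzo.1).trans_le hzo.2.le

lemma knappCombMeasure_closedBall_le (h : AdmissibleScale c R κ) (hκ : 2 * κ * (n + 2) ≤ p)
    (x : EuclideanSpace ℝ (Fin (m + (p + n) + m + 1))) {r : ℝ} (hr : 0 < r) :
    knappCombMeasure m p n c R κ (closedBall x r) ≤
      ENNReal.ofReal ((16 * Real.pi / c ^ 4) ^ (m + (p + n) + 1) * R ^ (p / 2 - κ * (n + 2)) *
        r ^ (m + p + n + 1 - 2 * κ * (n + 2))) := by
  have hc := h.pos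
  have hgrowth := HasBallGrowth.pi (fun o r hr => mul_nonneg (by positivity)
    (physGrowth_nonneg h.scale_pos.le hr.le o)) (hasBallGrowth_physBox (m := m) (p := p) (n := n) h)
  rw [knappCombMeasure, Measure.map_apply continuous_antidiagonalEmbed.measurable
    measurableSet_closedBall]
  refine (measure_mono (antidiagonalEmbed_preimage_closedBall_subset x hr.le)).trans <|
    (hgrowth.cond_closedBall_le measurableSet_pi_physBox (volume_pi_physBox_ne_zero h)
      (volume_pi_physBox_ne_top h) _ hr).trans (ENNReal.ofReal_le_ofReal ?_)
  rw [Finset.prod_mul_distrib, Finset.prod_const, mul_assoc]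
  simp only [Finset.card_univ, Fintype.card_option, Fintype.card_sum, Fintype.card_fin]
  gcongr
  exact prod_physGrowth_le_rpow h.scale_pos hr h.exponent_nonneg hκ

lemma rpow_le_hypAvg_knappCombMeasure (h : AdmissibleScale c R κ)
    (hc : 5 * (m + (p + n) + m + 1 : ℕ) * c ≤ 1) :
    (c / 2) ^ (m + (p + n) + m) / 4 * R ^ (-(m + p / 2 + (1 - κ) * n)) ≤
      hypAvg (m + (p + n) + m + 1) m (knappCombMeasure m p n c R κ) R := by
  have := isProbabilityMeasure_knappCombMeasure (m := m) (p := p) (n := n) h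
  have hc₀ := h.pos
  have hcount : (m + (p + n) : ℕ) * c ≤ (m + (p + n) + m : ℕ) * c :=
    mul_le_mul_of_nonneg_right (Nat.cast_le.2 (Nat.le_add_right _ _)) hc₀.le
  rw [Nat.cast_succ] at hc
  have hball : (m + (p + n) + m : ℕ) * (2 * c) < 1 := by
    have : 0 ≤ (m + (p + n) + m : ℕ) * c := by positivity
    linarith
  have hphase : (m + (p + n) : ℕ) * (5 * c) ≤ 1 := by linarith
  rw [div_mul_eq_mul_div]
  refine (div_le_div_of_nonneg_right (rpow_le_volume_freqSet h) zero_le_four).trans ?_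
  refine volume_div_four_le_hypAvg (d := m + (p + n) + m + 1) _ measurableSet_freqSet
    (freqSet_subset_ball h hball) fun ξ hξ => ?_
  refine ae_knappCombMeasure (isClosed_le ?_ continuous_const).measurableSet
    fun z hz => (norm_sum_antidiagonalEmbed_mul_le h hz hξ).trans hphase
  exact continuous_norm.comp ((AddCircle.continuous_mk' _).comp (by fun_prop))

end KnappCombMeasure

theorem decayFails_of_knapp_comb {m p n : ℕ} {α β κ : ℝ} (hκ₀ : 0 ≤ κ) (hκ₁ : κ ≤ 1 / 4)
    (hκ : 2 * κ * (n + 2) ≤ p) (hα : 0 < α) (hακ : α < m + p + n + 1 - 2 * κ * (n + 2))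
    (hβ : m + p + n - 2 * κ * (n + 1) < β) :
    decayFails (m + (p + n) + m + 1) m α β := by
  obtain ⟨c, hc₀, hcN⟩ : ∃ c : ℝ, 0 < c ∧ 5 * (m + (p + n) + m + 1 : ℕ) * c = 1 :=
    ⟨1 / (5 * (m + (p + n) + m + 1 : ℕ)), by positivity, mul_one_div_cancel (by positivity)⟩
  have hN : (1 : ℝ) ≤ (m + (p + n) + m + 1 : ℕ) := Nat.one_le_cast.2 (Nat.succ_pos _)
  have hc₁ : c ≤ 1 := by nlinarith
  refine decayFails_of_eventually_frostman (e₁ := p / 2 - κ * (n + 2))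
    (e₂ := m + p / 2 + (1 - κ) * n) (K := (16 * Real.pi / c ^ 4) ^ (m + (p + n) + 1))
    (c := (c / 2) ^ (m + (p + n) + m) / 4) hα hακ (by linarith) (by linarith) (by positivity)
    (by positivity) ?_
  filter_upwards [Filter.eventually_gt_atTop 1,
    (tendsto_rpow_atTop (by norm_num : (0 : ℝ) < 1 / 2)).eventually_ge_atTop
      (2 * Real.pi / c ^ 3)] with R hR hRc
  have h : AdmissibleScale c R κ := ⟨hc₀, hc₁, hR, hκ₀, hκ₁, hRc⟩
  exact ⟨knappCombMeasure m p n c R κ, isProbabilityMeasure_knappCombMeasure h,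
    knappCombMeasure_compl_closedBall h (by linarith),
    fun x r hr => knappCombMeasure_closedBall_le h hκ x hr,
    rpow_le_hypAvg_knappCombMeasure h hcN.le⟩

theorem decayFails_of_growth_exponent {m n : ℕ} {α β γ : ℝ} (hα : 0 < α) (hαγ : α < γ)
    (hγ₁ : (m + n + 1 : ℝ) ≤ γ) (hγ₂ : γ ≤ m + n + 2) (hγβ : (n + 1) * γ + m < (n + 2) * β) :
    decayFails (m + (1 + n) + m + 1) m α β := by
  set κ : ℝ := (m + n + 2 - γ) / (2 * (n + 2)) with hκ_def
  have hκ : 2 * κ * (n + 2) = m + n + 2 - γ := by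
    rw [hκ_def]
    field_simp
  have hκ₁ : κ ≤ 1 / 4 := by
    rw [hκ_def, div_le_iff₀ (by positivity)]
    linarith [n.cast_nonneg (α := ℝ)]
  refine decayFails_of_knapp_comb (div_nonneg (by linarith) (by positivity)) hκ₁ ?_ hα ?_ ?_
  · push_cast
    linarith
  · push_cast
    linarith
  · refine lt_of_mul_lt_mul_left (lt_of_eq_of_lt ?_ hγβ) (by positivity)
    push_cast
    linear_combination -(n + 1) * hκ

theorem statement0_general (d m : ℕ) (hm : 2 * m < d) (α : ℝ) (hα₀ : 0 < α)
    (hα₁ : (d : ℝ) - m - 1 ≤ α) (hα₂ : α < (d : ℝ) - m)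
    (β : ℝ) (hβ : α - (α - m) / ((d : ℝ) - 2 * m) < β) :
    decayFails d m α β := by
  rcases (Nat.succ_le_of_lt hm).eq_or_lt with hd | hd
  · obtain rfl : d = m + (0 + 0) + m + 1 := by omega
    push_cast at hα₂ hβ
    ring_nf at hα₂ hβ
    exact decayFails_of_knapp_comb (κ := 0) le_rfl (by norm_num) (by simp) hα₀
      (by push_cast; linarith) (by push_cast; linarith)
  · obtain ⟨n, rfl⟩ : ∃ n, d = m + (1 + n) + m + 1 := ⟨d - 2 * m - 2, by omega⟩
    push_cast at hα₁ hα₂ hβ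
    have hα_lt : α < ((n + 2) * β - m) / (n + 1) := by
      rw [show (m + (1 + n) + m + 1 - 2 * m : ℝ) = n + 2 by ring, sub_lt_iff_lt_add',
        ← sub_lt_iff_lt_add, lt_div_iff₀ (by positivity)] at hβ
      rw [lt_div_iff₀ (by positivity)]
      linarith
    obtain ⟨γ, hαγ, hγ⟩ := exists_between (lt_min hα₂ hα_lt)
    obtain ⟨hγ_dim, hγβ⟩ := lt_min_iff.1 hγ
    rw [lt_div_iff₀ (by positivity)] at hγβ
    exact decayFails_of_growth_exponent hα₀ hαγ (by linarith) (by linarith) (by linarith)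

/-- if `d-m-1 <= a < d-m`, then for every `b > a - (a-m)/(d-2m)` the decay
estimate fails, i.e. `beta(a, H_m^{d-1}) <= a - (a-m)/(d-2m)`. -/
theorem statement0 (d m : ℕ) (hd : 3 ≤ d) (hm1 : 1 ≤ m) (hm2 : 2 * m ≤ d - 1)
    (α : ℝ) (hα1 : (d : ℝ) - m - 1 ≤ α) (hα2 : α < (d : ℝ) - m)
    (β : ℝ) (hβ : α - (α - m) / ((d : ℝ) - 2 * m) < β) :
    decayFails d m α β := by
  have hm : 2 * m < d := by omega
  have hmd : (2 * m + 1 : ℝ) ≤ d := mod_cast hm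
  have hm₁ : (1 : ℝ) ≤ m := mod_cast hm1
  exact statement0_general d m hm α (by linarith) hα1 hα2 β hβ
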